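/- For lattice polytopes P_1, ..., P_n in R^n, the normalized mixed volume satisfies MV(P_1,...,P_n) = sum over all subsets I of [n] of (-1)^(n-|I|) times the number of lattice points in the Minkowski sum P_I (where P_∅ = {0} contributes 1). -/

import Mathlib

open scoped Pointwise
open MeasureTheory Finset

def IsLatticePt {n : ℕ} (x : Fin n → ℝ) : Prop := ∀ i, ∃ z : ℤ, x i = (z : ℝ)

def IsLatticePolytope {n : ℕ} (P : Set (Fin n → ℝ)) : Prop :=
  ∃ V : Finset (Fin n → ℝ), V.Nonempty ∧ (∀ v ∈ V, IsLatticePt v) ∧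
    P = convexHull ℝ (V : Set (Fin n → ℝ))

noncomputable def adim {n : ℕ} (A : Set (Fin n → ℝ)) : ℕ :=
  Module.finrank ℝ (affineSpan ℝ A).direction

def relintLat {n : ℕ} (A : Set (Fin n → ℝ)) : Set (Fin n → ℝ) :=
  {x ∈ intrinsicInterior ℝ A | IsLatticePt x}

def intLat {n : ℕ} (A : Set (Fin n → ℝ)) : Set (Fin n → ℝ) :=
  {x ∈ interior A | IsLatticePt x}

noncomputable def mixedVol {n m : ℕ} (P : Fin m → Set (Fin n → ℝ)) : ℝ :=
  ∑ I : Finset (Fin m), (-1 : ℝ) ^ (m - I.card) * (volume (∑ i ∈ I, P i)).toReal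

/-!
The lattice point count of `∑ i ∈ I, k • P i` grows like `k ^ n * vol (∑ i ∈ I, P i)`, so it
suffices that the alternating sum of lattice point counts is homogeneous of degree `n` in
`(P 1, …, P n)`. It is a mixed difference of the lattice point count, hence multi-additive as soon
as mixed differences in more than `n` directions vanish.

For the latter, encode the lattice points of all the sums `∑ i ∈ I, P i` as points of the Cayley
cone, which is generated by the vectors `(v, e_i)` with `v` a vertex of `P i`. The lexicographically
least nonnegative representation of a point of the cone has linearly independent support. When there
are more polytopes than dimensions, and all the coordinates of the height are positive (a small
common shift of the slices, invisible to the lattice points, arranges this), some `i` has a single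
generator `(v, e_i)` in this support. Adding this generator, or subtracting it when `i ∈ I`, changes
neither the support nor the chosen generator. So this is an involution, and it reverses the sign
`(-1) ^ #I`.
-/

section Lex

theorem exists_isLeast_toLex_of_isCompact {ι : Type*} [Finite ι] [LinearOrder ι]
    {α : ι → Type*} [∀ i, LinearOrder (α i)] [∀ i, TopologicalSpace (α i)]
    [∀ i, OrderClosedTopology (α i)] {K : Set (∀ i, α i)} (hK : IsCompact K) (hne : K.Nonempty) :
    ∃ c ∈ K, ∀ c' ∈ K, toLex c ≤ toLex c' := by
  cases nonempty_fintype ι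
  suffices h : ∀ s : Finset ι, ∃ c ∈ K, ∀ c' ∈ K, (∀ j ∈ s, c' j = c j) ∨
      ∃ k ∈ s, (∀ j ∈ s, j < k → c j = c' j) ∧ c k < c' k by
    obtain ⟨c, hc, hmin⟩ := h univ
    refine ⟨c, hc, fun c' hc' => (hmin c' hc').elim (fun h => ?_) fun ⟨k, _, hlt⟩ => ?_⟩
    · rw [funext fun j => h j (mem_univ j)]
    · exact le_of_lt ⟨k, fun j => hlt.1 j (mem_univ j), hlt.2⟩
  intro s
  induction s using Finset.induction_on_max with
  | empty => exact hne.imp fun c hc => ⟨hc, fun _ _ => Or.inl (by simp)⟩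
  | insert a s ha ih =>
    obtain ⟨c, hc, hmin⟩ := ih
    have hclosed : IsClosed {c' : ∀ i, α i | ∀ j ∈ s, c' j = c j} := by
      simp only [Set.ofPred_forall]
      exact isClosed_biInter fun j _ => isClosed_eq (continuous_apply j) continuous_const
    obtain ⟨b, ⟨hbK, hb⟩, hbmin⟩ := (hK.inter_right hclosed).exists_isMinOn
      ⟨c, hc, fun _ _ => rfl⟩ (continuous_apply a).continuousOn
    refine ⟨b, hbK, fun c' hc' => ?_⟩
    rcases hmin c' hc' with heq | ⟨k, hk, hlt, hck⟩
    · rcases (hbmin ⟨hc', heq⟩ : b a ≤ c' a).eq_or_lt with h | h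
      · refine Or.inl (Finset.forall_mem_insert _ _ _ |>.mpr ⟨h.symm, fun j hj => ?_⟩)
        rw [heq j hj, hb j hj]
      · refine Or.inr ⟨a, mem_insert_self a s, fun j hj hja => ?_, h⟩
        have hjs := mem_of_mem_insert_of_ne hj hja.ne
        rw [heq j hjs, hb j hjs]
    · refine Or.inr ⟨k, mem_insert_of_mem hk, fun j hj hjk => ?_, by rwa [hb k hk]⟩
      have hjs := mem_of_mem_insert_of_ne hj (hjk.trans (ha k hk)).ne
      rw [hb j hjs, hlt j hjs hjk]

theorem toLex_nonneg_of_smul_nonneg {J : Type*} [LinearOrder J] [WellFoundedLT J] {d : J → ℝ}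
    {t : ℝ} (ht : 0 < t) (h : 0 ≤ toLex (t • d)) : 0 ≤ toLex d := by
  by_contra! hd
  obtain ⟨k, hk, hneg⟩ := hd
  refine h.not_gt ⟨k, fun j hj => ?_, ?_⟩
  · exact mul_eq_zero_of_right t (hk j hj)
  · exact mul_neg_of_pos_of_neg ht hneg

theorem exists_pos_nonneg_add_smul {J : Type*} [Finite J] {c d : J → ℝ} (hc : 0 ≤ c)
    (hd : ∀ j, c j = 0 → 0 ≤ d j) : ∃ t : ℝ, 0 < t ∧ 0 ≤ c + t • d := by
  have hev : ∀ j, ∀ᶠ t : ℝ in nhdsWithin 0 (Set.Ioi 0), 0 ≤ c j + t * d j := by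
    intro j
    rcases (hc j).eq_or_lt with h | h
    · filter_upwards [self_mem_nhdsWithin] with t ht
      simpa [← h] using mul_nonneg (le_of_lt ht) (hd j h.symm)
    · have hlim : Filter.Tendsto (fun t : ℝ => c j + t * d j) (nhds 0) (nhds (c j)) :=
        Continuous.tendsto' (by fun_prop) _ _ (by simp)
      exact nhdsWithin_le_nhds ((hlim.eventually (lt_mem_nhds h)).mono fun _ => le_of_lt)
  obtain ⟨t, hnonneg, ht⟩ := ((Filter.eventually_all.mpr hev).and self_mem_nhdsWithin).exists
  exact ⟨t, ht, hnonneg⟩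

theorem add_single_eq_zero_iff {J : Type*} [DecidableEq J] {c : J → ℝ} {j : J} {t : ℝ}
    (hj : c j ≠ 0) (ht : 0 < c j + t) (k : J) :
    (c + Pi.single j t : J → ℝ) k = 0 ↔ c k = 0 := by
  rcases eq_or_ne k j with rfl | hk
  · simp [hj, ht.ne']
  · simp [hk]

end Lex

section LexMin

variable {J E : Type*} [Fintype J] [LinearOrder J] [AddCommGroup E] [Module ℝ E]
  {g : J → E} {c c' d : J → ℝ}

/-- `c` is the lexicographically least nonnegative coefficient vector representing
`∑ j, c j • g j`. The supports of such vectors span the simplicial cones of a triangulation of the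
cone generated by `g`. -/
def IsLexMinRep (g : J → E) (c : J → ℝ) : Prop :=
  0 ≤ c ∧ ∀ c', 0 ≤ c' → Fintype.linearCombination ℝ g c' = Fintype.linearCombination ℝ g c →
    toLex c ≤ toLex c'

theorem IsLexMinRep.eq (h : IsLexMinRep g c) (h' : IsLexMinRep g c')
    (heq : Fintype.linearCombination ℝ g c = Fintype.linearCombination ℝ g c') : c = c' :=
  toLex_inj.mp ((h.2 c' h'.1 heq.symm).antisymm (h'.2 c h.1 heq))

theorem IsLexMinRep.toLex_nonneg (h : IsLexMinRep g c)
    (hd : Fintype.linearCombination ℝ g d = 0) (hpos : ∀ j, c j = 0 → 0 ≤ d j) :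
    0 ≤ toLex d := by
  obtain ⟨t, ht, hnonneg⟩ := exists_pos_nonneg_add_smul h.1 hpos
  have hle : toLex c ≤ toLex c + toLex (t • d) := h.2 (c + t • d) hnonneg (by simp [hd])
  exact toLex_nonneg_of_smul_nonneg ht (le_add_iff_nonneg_right _ |>.mp hle)

theorem IsLexMinRep.linearIndepOn (h : IsLexMinRep g c) :
    LinearIndepOn ℝ g {j | c j ≠ 0} := by
  rw [linearIndepOn_iff'']
  intro s d hs hd hsum j _
  have hzero : ∀ k, c k = 0 → d k = 0 := fun k hk => hd k fun hks => hs hks hk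
  have hcomb : Fintype.linearCombination ℝ g d = 0 := by
    rw [Fintype.linearCombination_apply, ← hsum]
    exact (sum_subset (subset_univ s) fun k _ hk => by rw [hd k hk, zero_smul]).symm
  have hge : 0 ≤ toLex d := h.toLex_nonneg hcomb fun k hk => (hzero k hk).ge
  have hle : 0 ≤ -toLex d := h.toLex_nonneg (d := -d) (by simp [hcomb]) fun k hk => by
    simp [hzero k hk]
  have hd0 : toLex d = 0 := (neg_nonneg.mp hle).antisymm hge
  exact congrFun hd0 j

theorem IsLexMinRep.of_support (h : IsLexMinRep g c) (hc' : 0 ≤ c')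
    (hsupp : ∀ j, c j = 0 → c' j = 0) : IsLexMinRep g c' := by
  refine ⟨hc', fun c'' hc'' heq => ?_⟩
  have hdiff : 0 ≤ toLex c'' - toLex c' := h.toLex_nonneg (d := c'' - c') (by simp [heq])
    fun j hj => by simpa [hsupp j hj] using hc'' j
  exact sub_nonneg.mp hdiff

theorem IsLexMinRep.add_single (h : IsLexMinRep g c) {j : J} {t : ℝ} (hj : c j ≠ 0)
    (ht : 0 < c j + t) : IsLexMinRep g (c + Pi.single j t) := by
  refine h.of_support (fun k => ?_) fun k => (add_single_eq_zero_iff hj ht k).mpr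
  rcases eq_or_ne k j with rfl | hk
  · simpa using ht.le
  · simpa [hk] using h.1 k

end LexMin

section Cayley

variable {J κ E : Type*} [Fintype J] [DecidableEq κ] [AddCommGroup E] [Module ℝ E]

/-- The generators of the Cayley cone of the point configurations `{v j | col j = i}`, `i : κ`: the
point `v j` is lifted to `(v j, e_i)` where `i = col j`. -/
def cayleyVector (col : J → κ) (v : J → E) (j : J) : E × (κ → ℝ) :=
  (v j, Pi.single (col j) 1)

/-- The cone generated by the Cayley vectors. Its slice over a height `h ≥ 0` is the Minkowski sum
of the `h i`-fold dilates of the polytopes `conv {v j | col j = i}`. -/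
def cayleyCone (col : J → κ) (v : J → E) : PointedCone ℝ (E × (κ → ℝ)) :=
  (PointedCone.positive ℝ (J → ℝ)).map (Fintype.linearCombination ℝ (cayleyVector col v))

/-- `j` is the only element of its color in the support of `c`. -/
def IsColorIsolated (col : J → κ) (c : J → ℝ) (j : J) : Prop :=
  c j ≠ 0 ∧ ∀ j', c j' ≠ 0 → col j' = col j → j' = j

variable {col : J → κ} {v : J → E} {c : J → ℝ}

theorem linearCombination_cayleyVector_fst :
    (Fintype.linearCombination ℝ (cayleyVector col v) c).1 = Fintype.linearCombination ℝ v c := by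
  simp [Fintype.linearCombination_apply, cayleyVector, Prod.fst_sum]

theorem linearCombination_cayleyVector_snd (i : κ) :
    (Fintype.linearCombination ℝ (cayleyVector col v) c).2 i = ∑ j with col j = i, c j := by
  simp [Fintype.linearCombination_apply, cayleyVector, Prod.snd_sum, Pi.single_apply, sum_filter,
    eq_comm]

theorem le_linearCombination_cayleyVector_snd (hc : 0 ≤ c) (j : J) :
    c j ≤ (Fintype.linearCombination ℝ (cayleyVector col v) c).2 (col j) := by
  rw [linearCombination_cayleyVector_snd]
  exact single_le_sum (f := c) (fun k _ => hc k) (by simp)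

theorem IsColorIsolated.eq_height {j : J} (h : IsColorIsolated col c j) :
    c j = (Fintype.linearCombination ℝ (cayleyVector col v) c).2 (col j) := by
  rw [linearCombination_cayleyVector_snd, sum_eq_single j (fun k hk hkj => ?_) (by simp)]
  by_contra hck
  exact hkj (h.2 k hck (by simpa using hk))

theorem isClosed_setOf_linearMap_eq {ι F : Type*} [Finite ι] [AddCommGroup F] [Module ℝ F]
    (f : (ι → ℝ) →ₗ[ℝ] F) (y : F) : IsClosed {c | f c = y} := by
  by_cases h : ∃ c₀, f c₀ = y
  · obtain ⟨c₀, rfl⟩ := h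
    have hker : {c | f c = f c₀} = (· - c₀) ⁻¹' (LinearMap.ker f : Set (ι → ℝ)) := by
      ext c
      simp [sub_eq_zero]
    rw [hker]
    exact (LinearMap.ker f).closed_of_finiteDimensional.preimage (continuous_sub_right c₀)
  · simp [not_exists.mp h]

theorem isCompact_setOf_nonneg_linearCombination_cayleyVector_eq (col : J → κ) (v : J → E)
    (y : E × (κ → ℝ)) :
    IsCompact {c | 0 ≤ c ∧ Fintype.linearCombination ℝ (cayleyVector col v) c = y} := by
  refine (isCompact_Icc (a := 0) (b := fun j => y.2 (col j))).of_isClosed_subset ?_ ?_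
  · exact isClosed_Ici.inter (isClosed_setOf_linearMap_eq _ y)
  · rintro c ⟨hc, rfl⟩
    exact ⟨hc, le_linearCombination_cayleyVector_snd hc⟩

theorem exists_isLexMinRep_cayleyVector [LinearOrder J] {y : E × (κ → ℝ)}
    (hy : y ∈ cayleyCone col v) :
    ∃ c, IsLexMinRep (cayleyVector col v) c ∧
      Fintype.linearCombination ℝ (cayleyVector col v) c = y := by
  obtain ⟨c, ⟨hc, heq⟩, hmin⟩ := exists_isLeast_toLex_of_isCompact
    (isCompact_setOf_nonneg_linearCombination_cayleyVector_eq col v y) hy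
  exact ⟨c, ⟨hc, fun c' hc' heq' => hmin c' ⟨hc', heq'.trans heq⟩⟩, heq⟩

theorem IsLexMinRep.card_support_le [LinearOrder J] [Fintype κ] [FiniteDimensional ℝ E]
    (hc : IsLexMinRep (cayleyVector col v) c) :
    #{j | c j ≠ 0} ≤ Module.finrank ℝ E + Fintype.card κ := by
  have hcard := LinearIndependent.fintype_card_le_finrank hc.linearIndepOn
  rw [Module.finrank_prod, Module.finrank_fintype_fun_eq_card] at hcard
  exact (Fintype.card_subtype _).symm.trans_le hcard

/-- If every color class met the support at least twice, the support would have at least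
`2 * card κ > finrank E + card κ` elements. -/
theorem IsLexMinRep.exists_isColorIsolated [LinearOrder J] [Fintype κ] [FiniteDimensional ℝ E]
    (hc : IsLexMinRep (cayleyVector col v) c) (hκ : Module.finrank ℝ E < Fintype.card κ)
    (hpos : ∀ i, 0 < (Fintype.linearCombination ℝ (cayleyVector col v) c).2 i) :
    ∃ j, IsColorIsolated col c j := by
  by_contra! hnone
  have htwo : ∀ i, 2 ≤ #{j | c j ≠ 0 ∧ col j = i} := by
    intro i
    obtain ⟨j, hj, hcj⟩ := exists_ne_zero_of_sum_ne_zero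
      ((linearCombination_cayleyVector_snd i).symm.trans_ne (hpos i).ne')
    obtain rfl : col j = i := by simpa using hj
    obtain ⟨k, hck, hcol, hne⟩ : ∃ k, c k ≠ 0 ∧ col k = col j ∧ k ≠ j := by
      simpa [IsColorIsolated, hcj] using hnone j
    exact one_lt_card.mpr ⟨j, by simp [hcj], k, by simp [hck, hcol], hne.symm⟩
  have hdouble : 2 * Fintype.card κ ≤ #{j | c j ≠ 0} := by
    rw [card_eq_sum_card_fiberwise (f := col) (t := univ) (fun _ _ => by simp), mul_comm]
    simp only [filter_filter]
    exact card_nsmul_le_sum univ _ 2 fun i _ => htwo i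
  have hle := hc.card_support_le
  omega

/-- Moving a point along `cayleyVector col v (π y)` only changes the coefficient of an isolated
element, so the support of its lexicographically least representation stays the same. -/
theorem exists_pivot [Nonempty J] [Fintype κ] [FiniteDimensional ℝ E]
    (hκ : Module.finrank ℝ E < Fintype.card κ) (col : J → κ) (v : J → E) :
    ∃ π : E × (κ → ℝ) → J, ∀ y ∈ cayleyCone col v, (∀ i, 0 < y.2 i) →
      ∀ t : ℝ, 0 < y.2 (col (π y)) + t →
        y + t • cayleyVector col v (π y) ∈ cayleyCone col v ∧
          π (y + t • cayleyVector col v (π y)) = π y := by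
  let _ : LinearOrder J := LinearOrder.lift' (Fintype.equivFin J) (Fintype.equivFin J).injective
  choose! c hmin hrep using fun y (hy : y ∈ cayleyCone col v) => exists_isLexMinRep_cayleyVector hy
  let pivotOf (s : Set J) : J :=
    Classical.epsilon fun j => j ∈ s ∧ ∀ j' ∈ s, col j' = col j → j' = j
  refine ⟨fun y => pivotOf {j | c y j ≠ 0}, fun y hy hpos t ht => ?_⟩
  dsimp only at ht ⊢
  generalize hj : pivotOf {j | c y j ≠ 0} = j at ht ⊢
  have hiso : IsColorIsolated col (c y) j :=
    hj ▸ Classical.epsilon_spec ((hmin y hy).exists_isColorIsolated hκ (by rwa [hrep y hy]))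
  rw [← hrep y hy, ← hiso.eq_height] at ht
  have hmin' := (hmin y hy).add_single hiso.1 ht
  have hrep' : Fintype.linearCombination ℝ (cayleyVector col v) (c y + Pi.single j t) =
      y + t • cayleyVector col v j := by
    rw [map_add, hrep y hy, Fintype.linearCombination_apply_single]
  have hmem : y + t • cayleyVector col v j ∈ cayleyCone col v := ⟨_, hmin'.1, hrep'⟩
  have hc : c (y + t • cayleyVector col v j) = c y + Pi.single j t :=
    (hmin _ hmem).eq hmin' ((hrep _ hmem).trans hrep'.symm)
  refine ⟨hmem, ?_⟩
  simp only [hc, ne_eq, add_single_eq_zero_iff hiso.1 ht]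
  exact hj

end Cayley

section Involution

variable {J κ E : Type*} [DecidableEq κ] [AddCommGroup E]

/-- The point of `E × (κ → ℝ)` lying over `p.2` whose height is the indicator vector of `p.1`. -/
noncomputable def cayleyLift (p : (_ : Finset κ) × E) : E × (κ → ℝ) :=
  (p.2, (p.1 : Set κ).indicator 1)

/-- Adds the Cayley vector of `j` to `cayleyLift p`, or subtracts it if the color of `j` is already
present in `p`. -/
def cayleyFlip (col : J → κ) (v : J → E) (j : J) (p : (_ : Finset κ) × E) : (_ : Finset κ) × E :=
  if col j ∈ p.1 then ⟨p.1.erase (col j), p.2 - v j⟩ else ⟨insert (col j) p.1, p.2 + v j⟩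

variable {col : J → κ} {v : J → E}

theorem cayleyFlip_cayleyFlip (j : J) (p : (_ : Finset κ) × E) :
    cayleyFlip col v j (cayleyFlip col v j p) = p := by
  by_cases h : col j ∈ p.1 <;> simp [cayleyFlip, h]

theorem neg_one_pow_card_cayleyFlip (j : J) (p : (_ : Finset κ) × E) :
    (-1 : ℤ) ^ #(cayleyFlip col v j p).1 = -(-1) ^ #p.1 := by
  by_cases h : col j ∈ p.1
  · rw [← card_erase_add_one h]
    simp [cayleyFlip, h, pow_succ]
  · simp [cayleyFlip, h, pow_succ]

theorem cayleyFlip_ne (j : J) (p : (_ : Finset κ) × E) : cayleyFlip col v j p ≠ p := by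
  intro heq
  have hsign := neg_one_pow_card_cayleyFlip (col := col) (v := v) j p
  rw [heq, self_eq_neg] at hsign
  exact pow_ne_zero _ (by norm_num) hsign

theorem cayleyFlip_snd_mem {L : AddSubgroup E} {j : J} (hv : v j ∈ L) {p : (_ : Finset κ) × E}
    (hp : p.2 ∈ L) : (cayleyFlip col v j p).2 ∈ L := by
  by_cases h : col j ∈ p.1
  · simpa [cayleyFlip, h] using L.sub_mem hp hv
  · simpa [cayleyFlip, h] using L.add_mem hp hv

variable [Module ℝ E]

theorem exists_cayleyLift_cayleyFlip_eq (j : J) (p : (_ : Finset κ) × E) :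
    ∃ t : ℝ, cayleyLift (cayleyFlip col v j p) = cayleyLift p + t • cayleyVector col v j := by
  by_cases h : col j ∈ p.1
  · refine ⟨-1, Prod.ext (by simp [cayleyLift, cayleyFlip, cayleyVector, h, sub_eq_add_neg]) ?_⟩
    ext i
    rcases eq_or_ne i (col j) with rfl | hi <;>
      simp [cayleyLift, cayleyFlip, cayleyVector, Set.indicator, *]
  · refine ⟨1, Prod.ext (by simp [cayleyLift, cayleyFlip, cayleyVector, h]) ?_⟩
    ext i
    rcases eq_or_ne i (col j) with rfl | hi <;>
      simp [cayleyLift, cayleyFlip, cayleyVector, Set.indicator, *]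

theorem sum_neg_one_pow_card_mul_ncard_cayleyCone_eq_zero [Fintype J] [Nonempty J] [Fintype κ]
    [FiniteDimensional ℝ E] (hκ : Module.finrank ℝ E < Fintype.card κ) {L : AddSubgroup E}
    (hv : ∀ j, v j ∈ L) {q : E × (κ → ℝ)} (hq : ∀ i, 0 < q.2 i)
    (hfin : ∀ I : Finset κ, {a | a ∈ L ∧ cayleyLift ⟨I, a⟩ + q ∈ cayleyCone col v}.Finite) :
    ∑ I : Finset κ,
      (-1 : ℤ) ^ #I * {a | a ∈ L ∧ cayleyLift ⟨I, a⟩ + q ∈ cayleyCone col v}.ncard = 0 := by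
  obtain ⟨π, hπ⟩ := exists_pivot hκ col v
  let flip (p : (_ : Finset κ) × E) := cayleyFlip col v (π (cayleyLift p + q)) p
  have hflip : ∀ p, cayleyLift p + q ∈ cayleyCone col v →
      cayleyLift (flip p) + q ∈ cayleyCone col v ∧
        π (cayleyLift (flip p) + q) = π (cayleyLift p + q) := by
    intro p hp
    obtain ⟨t, ht⟩ :=
      exists_cayleyLift_cayleyFlip_eq (col := col) (v := v) (π (cayleyLift p + q)) p
    have hpos : ∀ p i, 0 < (cayleyLift p + q).2 i := fun p i =>
      add_pos_of_nonneg_of_pos (Set.indicator_nonneg (fun _ _ => zero_le_one) i) (hq i)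
    have hshift : cayleyLift (flip p) + q =
        cayleyLift p + q + t • cayleyVector col v (π (cayleyLift p + q)) := by
      rw [ht, add_right_comm]
    have hheight := hpos (flip p) (col (π (cayleyLift p + q)))
    rw [hshift] at hheight ⊢
    exact hπ _ hp (hpos p) t (by simpa [cayleyVector] using hheight)
  have hsum : ∑ p ∈ univ.sigma fun I => (hfin I).toFinset, (-1 : ℤ) ^ #p.1 = 0 := by
    refine sum_involution (fun p _ => flip p) (fun p _ => ?_) (fun p _ _ => cayleyFlip_ne _ p)
      (fun p hp => ?_) fun p hp => ?_
    · rw [neg_one_pow_card_cayleyFlip, add_neg_cancel]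
    · simp only [mem_sigma, mem_univ, Set.Finite.mem_toFinset, true_and] at hp ⊢
      exact ⟨cayleyFlip_snd_mem (hv _) hp.1, (hflip p hp.2).1⟩
    · simp only [mem_sigma, mem_univ, Set.Finite.mem_toFinset, true_and] at hp
      change cayleyFlip col v (π (cayleyLift (flip p) + q)) (flip p) = p
      rw [(hflip p hp.2).2, cayleyFlip_cayleyFlip]
  rw [← hsum, sum_sigma]
  refine sum_congr rfl fun I _ => ?_
  rw [sum_const (b := (-1 : ℤ) ^ #I), nsmul_eq_mul, mul_comm, Set.ncard_eq_toFinset_card _ (hfin I)]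

end Involution

section Minkowski

variable {J κ E : Type*} [AddCommGroup E] [Module ℝ E]

theorem sum_smul_mem_smul_convexHull {ι : Type*} {s : Finset ι} {w : ι → ℝ} {v : ι → E}
    {S : Set E} (hS : S.Nonempty) (hw : ∀ i ∈ s, 0 ≤ w i) (hv : ∀ i ∈ s, v i ∈ S) :
    ∑ i ∈ s, w i • v i ∈ (∑ i ∈ s, w i) • convexHull ℝ S := by
  rcases (sum_nonneg hw).eq_or_lt with h | h
  · rw [← h, Set.zero_smul_set hS.convexHull]
    exact sum_eq_zero fun i hi => by
      rw [(sum_eq_zero_iff_of_nonneg hw).mp h.symm i hi, zero_smul]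
  · refine ⟨s.centerMass w v, s.centerMass_mem_convexHull hw h hv, ?_⟩
    exact smul_inv_smul₀ h.ne' _

variable [Fintype J] [DecidableEq κ] {col : J → κ} {v : J → E}

theorem cayleyVector_mem_cayleyCone (j : J) : cayleyVector col v j ∈ cayleyCone col v := by
  classical
  exact ⟨Pi.single j 1, Pi.single_nonneg.mpr zero_le_one, by simp⟩

theorem mk_single_mem_cayleyCone {i : κ} {t : ℝ} (ht : 0 ≤ t) {x : E}
    (hx : x ∈ t • convexHull ℝ (v '' (col ⁻¹' {i}))) :
    (x, Pi.single i t) ∈ cayleyCone col v := by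
  obtain ⟨z, hz, rfl⟩ := hx
  have hconv : Convex ℝ {z | (z, (Pi.single i 1 : κ → ℝ)) ∈ cayleyCone col v} := by
    intro z hz w hw a b ha hb hab
    have hmem := (cayleyCone col v).convex hz hw ha hb hab
    rwa [Prod.smul_mk, Prod.smul_mk, Prod.mk_add_mk, ← add_smul, hab, one_smul] at hmem
  have hsub : v '' (col ⁻¹' {i}) ⊆ {z | (z, (Pi.single i 1 : κ → ℝ)) ∈ cayleyCone col v} := by
    rintro _ ⟨j, rfl, rfl⟩
    exact cayleyVector_mem_cayleyCone j
  have hmem := (cayleyCone col v).smul_mem ht (convexHull_min hsub hconv hz)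
  rwa [Prod.smul_mk, ← Pi.single_smul, smul_eq_mul, mul_one] at hmem

theorem mk_mem_cayleyCone_iff [Fintype κ] (hcol : Function.Surjective col) {x : E} {h : κ → ℝ}
    (hh : 0 ≤ h) :
    (x, h) ∈ cayleyCone col v ↔ x ∈ ∑ i, h i • convexHull ℝ (v '' (col ⁻¹' {i})) := by
  constructor
  · rintro ⟨c, hc, heq⟩
    replace hc : 0 ≤ c := hc
    obtain rfl : Fintype.linearCombination ℝ v c = x := by
      rw [← linearCombination_cayleyVector_fst (col := col)]
      exact congrArg Prod.fst heq
    obtain rfl : (fun i => ∑ j with col j = i, c j) = h := by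
      refine Eq.trans ?_ (congrArg Prod.snd heq)
      exact funext fun i => (linearCombination_cayleyVector_snd i).symm
    rw [Fintype.linearCombination_apply, ← sum_fiberwise univ col]
    refine Set.finsetSum_mem_finsetSum _ _ _ fun i _ => ?_
    refine sum_smul_mem_smul_convexHull (((Set.singleton_nonempty i).preimage hcol).image v)
      (fun j _ => hc j) fun j hj => ⟨j, by simpa using hj, rfl⟩
  · intro hx
    obtain ⟨z, hz, rfl⟩ := (Set.mem_finsetSum _ _ _).mp hx
    have hmem := sum_mem fun i hi => mk_single_mem_cayleyCone (hh i) (@hz i hi)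
    rwa [← prod_mk_sum, univ_sum_single] at hmem

end Minkowski

section Vanishing

variable {κ E : Type*}

theorem sum_indicator_add_const_smul [Fintype κ] [AddCommGroup E] [Module ℝ E] {P : κ → Set E}
    (hconv : ∀ i, Convex ℝ (P i)) (hne : ∀ i, (P i).Nonempty) (I : Finset κ) {ε : ℝ}
    (hε : 0 ≤ ε) :
    ∑ i, ((I : Set κ).indicator 1 i + ε) • P i = ∑ i ∈ I, P i + ε • ∑ i, P i := by
  classical
  have hsmul : ∀ i, (I : Set κ).indicator (1 : κ → ℝ) i • P i = if i ∈ I then P i else 0 := by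
    intro i
    by_cases hi : i ∈ I <;> simp [hi, Set.zero_smul_set (hne i)]
  have hadd : ∀ i, ((I : Set κ).indicator 1 i + ε) • P i =
      (I : Set κ).indicator (1 : κ → ℝ) i • P i + ε • P i := fun i =>
    (hconv i).add_smul (Set.indicator_nonneg (fun _ _ => zero_le_one) i) hε
  simp only [hadd, hsmul, sum_add_distrib, smul_sum, sum_ite_mem, univ_inter]

theorem cayleyLift_add_mem_cayleyCone_iff [Fintype κ] [DecidableEq κ] [AddCommGroup E]
    [Module ℝ E] {V : κ → Finset E} (hne : ∀ i, (V i).Nonempty) (p : E) {ε : ℝ} (hε : 0 < ε)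
    (I : Finset κ) (a : E) :
    cayleyLift ⟨I, a⟩ + (ε • p, fun _ => ε) ∈
        cayleyCone Sigma.fst (fun j : Σ i, V i => (j.2 : E)) ↔
      a + ε • p ∈ ∑ i ∈ I, convexHull ℝ (V i : Set E) + ε • ∑ i, convexHull ℝ (V i : Set E) := by
  have hsurj : Function.Surjective (Sigma.fst : (Σ i, V i) → κ) := fun i =>
    ⟨⟨i, (hne i).choose, (hne i).choose_spec⟩, rfl⟩
  have himage : ∀ i, (fun j : Σ i, V i => (j.2 : E)) '' (Sigma.fst ⁻¹' {i}) = V i := by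
    intro i
    ext x
    simp
  have hnonneg : 0 ≤ (I : Set κ).indicator 1 + fun _ => ε := fun i =>
    add_nonneg (Set.indicator_nonneg (fun _ _ => zero_le_one) i) hε.le
  rw [cayleyLift, Prod.mk_add_mk, mk_mem_cayleyCone_iff hsurj hnonneg]
  simp only [himage, Pi.add_apply]
  rw [sum_indicator_add_const_smul (fun i => convex_convexHull ℝ _)
    (fun i => (coe_nonempty.mpr (hne i)).convexHull) I hε.le]

theorem isCompact_finsetSum [AddCommMonoid E] [TopologicalSpace E] [ContinuousAdd E]
    {s : Finset κ} {K : κ → Set E} (hK : ∀ i ∈ s, IsCompact (K i)) :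
    IsCompact (∑ i ∈ s, K i) :=
  sum_induction K IsCompact (fun _ _ => IsCompact.add) isCompact_singleton hK

variable [NormedAddCommGroup E] (L : AddSubgroup E) [DiscreteTopology L]

theorem finite_setOf_mem_addSubgroup_and_mem [ProperSpace E] {A : Set E}
    (hA : Bornology.IsBounded A) : {a | a ∈ L ∧ a ∈ A}.Finite := by
  change ((L : Set E) ∩ A).Finite
  rw [Set.inter_comm]
  exact Metric.finite_isBounded_inter_isClosed DiscreteTopology.isDiscrete hA
    AddSubgroup.isClosed_of_discrete

variable [NormedSpace ℝ E]

theorem eventually_forall_mem_of_add_smul_mem_add_smul {K B : Set E} (hK : IsCompact K)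
    (hB : Bornology.IsBounded B) (p : E) :
    ∀ᶠ ε : ℝ in nhdsWithin 0 {0}ᶜ, ∀ a ∈ L, a + ε • p ∈ K + ε • B → a ∈ K := by
  have hclosed : IsClosed ((L : Set E) \ K) := by
    have hL := (AddSubgroup.isClosed_of_discrete (H := L)).isClosedEmbedding_subtypeVal
    rw [Set.sdiff_eq, ← Subtype.image_preimage_coe]
    exact hL.isClosedMap _ (isClosed_discrete _)
  obtain ⟨U, hU, hKU⟩ := compact_open_separated_add_right hK hclosed.isOpen_compl
    fun x hx hxL => hxL.2 hx
  have habs : Absorbs ℝ U (B - {p}) :=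
    NormedSpace.isVonNBounded_iff ℝ |>.mpr (hB.sub Bornology.isBounded_singleton) hU
  filter_upwards [habs.eventually_nhdsNE_zero] with ε hε a haL ha
  obtain ⟨x, hx, _, ⟨b, hb, rfl⟩, hxb⟩ := ha
  have hax : a = x + ε • (b - p) := by
    rw [smul_sub, ← add_sub_assoc, eq_sub_iff_add_eq]
    exact hxb.symm
  by_contra haK
  exact hKU (Set.add_mem_add hx (hε (Set.sub_mem_sub hb rfl))) (hax ▸ ⟨haL, haK⟩)

theorem sum_neg_one_pow_card_mul_ncard_sum_convexHull_eq_zero [Fintype κ]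
    [FiniteDimensional ℝ E] (hκ : Module.finrank ℝ E < Fintype.card κ) {V : κ → Finset E}
    (hne : ∀ i, (V i).Nonempty) (hV : ∀ i, ∀ x ∈ V i, x ∈ L) :
    ∑ I : Finset κ, (-1 : ℤ) ^ #I *
      {a | a ∈ L ∧ a ∈ ∑ i ∈ I, convexHull ℝ (V i : Set E)}.ncard = 0 := by
  classical
  let P (i : κ) : Set E := convexHull ℝ (V i)
  have hP : ∀ I : Finset κ, IsCompact (∑ i ∈ I, P i) := fun I =>
    isCompact_finsetSum fun i _ => (V i).finite_toSet.isCompact_convexHull ℝ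
  choose p hp using hne
  obtain ⟨ε, hεL, hε⟩ : ∃ ε : ℝ, (∀ I : Finset κ, ∀ a ∈ L,
      a + ε • ∑ i, p i ∈ ∑ i ∈ I, P i + ε • ∑ i, P i → a ∈ ∑ i ∈ I, P i) ∧ 0 < ε :=
    (((Filter.eventually_all.mpr fun I => eventually_forall_mem_of_add_smul_mem_add_smul L (hP I)
      (hP univ).isBounded _).filter_mono (nhdsGT_le_nhdsNE 0)).and self_mem_nhdsWithin).exists
  have hsum : ∑ i, p i ∈ ∑ i, P i :=
    Set.finsetSum_mem_finsetSum _ _ _ fun i _ => subset_convexHull ℝ _ (hp i)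
  have hslice : ∀ I : Finset κ, {a | a ∈ L ∧ cayleyLift ⟨I, a⟩ + (ε • ∑ i, p i, fun _ => ε) ∈
      cayleyCone Sigma.fst (fun j : Σ i, V i => (j.2 : E))} = {a | a ∈ L ∧ a ∈ ∑ i ∈ I, P i} := by
    intro I
    ext a
    simp only [Set.mem_ofPred_eq, cayleyLift_add_mem_cayleyCone_iff (fun i => ⟨p i, hp i⟩) _ hε]
    exact and_congr_right fun haL =>
      ⟨hεL I a haL, fun ha => Set.add_mem_add ha (Set.smul_mem_smul_set hsum)⟩
  have : Nonempty κ := Fintype.card_pos_iff.mp (Nat.zero_lt_of_lt hκ)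
  have : Nonempty (Σ i, V i) := this.map fun i => ⟨i, p i, hp i⟩
  rw [← sum_neg_one_pow_card_mul_ncard_cayleyCone_eq_zero hκ (L := L)
    (col := Sigma.fst) (v := fun j : Σ i, V i => (j.2 : E)) (fun j => hV j.1 j.2 j.2.2)
    (q := (ε • ∑ i, p i, fun _ => ε)) (fun _ => hε) fun I => by
      rw [hslice]; exact finite_setOf_mem_addSubgroup_and_mem L (hP I).isBounded]
  simp only [hslice, P]

end Vanishing

section MixedDifference

variable {ι M G : Type*} [AddCommGroup G]

/-- The additive extension of `f` to the monoid algebra `ℤ[M]`. -/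
noncomputable def monoidAlgebraEval (f : M → G) : AddMonoidAlgebra ℤ M →ₗ[ℤ] G :=
  Finsupp.linearCombination ℤ f ∘ₗ (AddMonoidAlgebra.coeffLinearEquiv ℤ).toLinearMap

theorem monoidAlgebraEval_single (f : M → G) (A : M) :
    monoidAlgebraEval f (AddMonoidAlgebra.single A 1) = f A := by
  simp [monoidAlgebraEval]

variable [Fintype ι] [AddCommMonoid M]

/-- The iterated mixed difference of `f` at `0` in the directions `P i`, written in the group-ring
picture as `f` applied to `∏ i, (T_{P i} - 1)` with `T` denoting translation. -/
def mixedDiff (f : M → G) (P : ι → M) : G :=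
  ∑ I : Finset ι, (-1 : ℤ) ^ (Fintype.card ι - #I) • f (∑ i ∈ I, P i)

theorem monoidAlgebraEval_prod_single_sub_one (f : M → G) (P : ι → M) :
    monoidAlgebraEval f (∏ i, (AddMonoidAlgebra.single (P i) 1 - 1)) = mixedDiff f P := by
  classical
  simp only [sub_eq_add_neg, Fintype.prod_add, prod_const, AddMonoidAlgebra.prod_single, map_sum,
    mixedDiff]
  refine sum_congr rfl fun I _ => ?_
  have hsmul : AddMonoidAlgebra.single (∑ i ∈ I, P i) ((1 : ℤ) ^ #I) * (-1) ^ #Iᶜ =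
      (-1 : ℤ) ^ (Fintype.card ι - #I) • AddMonoidAlgebra.single (∑ i ∈ I, P i) 1 := by
    rw [one_pow, mul_comm, card_compl, zsmul_eq_mul]
    push_cast
    rfl
  rw [hsmul, map_smul, monoidAlgebraEval_single]

theorem prod_single_update_sub_one [DecidableEq ι] (P : ι → M) (i : ι) (A : M) :
    ∏ j, (AddMonoidAlgebra.single (Function.update P i A j) (1 : ℤ) - 1) =
      (AddMonoidAlgebra.single A 1 - 1) *
        ∏ j ∈ univ.erase i, (AddMonoidAlgebra.single (P j) 1 - 1) := by
  rw [← mul_prod_erase univ _ (mem_univ i), Function.update_self]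
  congr 1
  exact prod_congr rfl fun j hj => by rw [Function.update_of_ne (ne_of_mem_erase hj)]

theorem mixedDiff_update_zero [DecidableEq ι] (f : M → G) (P : ι → M) (i : ι) :
    mixedDiff f (Function.update P i 0) = 0 := by
  rw [← monoidAlgebraEval_prod_single_sub_one, prod_single_update_sub_one,
    ← AddMonoidAlgebra.one_def, sub_self, zero_mul, map_zero]

/-- This is `T_{A + B} - 1 = (T_A - 1) + (T_B - 1) + (T_A - 1) * (T_B - 1)`. -/
theorem mixedDiff_update_add [DecidableEq ι] (f : M → G) (P : ι → M) (i : ι) (A B : M) :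
    mixedDiff f (Function.update P i (A + B)) =
      mixedDiff f (Function.update P i A) + mixedDiff f (Function.update P i B) +
        mixedDiff f (fun o : Option ι => o.elim A (Function.update P i B)) := by
  have hmul : AddMonoidAlgebra.single (A + B) (1 : ℤ) =
      AddMonoidAlgebra.single A 1 * AddMonoidAlgebra.single B 1 := by
    rw [AddMonoidAlgebra.single_mul_single, one_mul]
  simp only [← monoidAlgebraEval_prod_single_sub_one, Fintype.prod_option, Option.elim,
    prod_single_update_sub_one, ← map_add, hmul]
  congr 1
  ring

/-- The mixed difference as a multi-additive function, for `f` whose mixed differences with one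
more direction vanish. -/
def mixedDiffMultilinear (f : M → G) (hf : ∀ P : Option ι → M, mixedDiff f P = 0) :
    MultilinearMap ℕ (fun _ : ι => M) G where
  toFun := mixedDiff f
  map_update_add' P i A B := by rw [mixedDiff_update_add, hf, add_zero]
  map_update_smul' P i k A := by
    induction k with
    | zero => rw [zero_smul, zero_smul, mixedDiff_update_zero]
    | succ k ih => rw [succ_nsmul, mixedDiff_update_add, hf, add_zero, ih, succ_nsmul]

theorem mixedDiff_nsmul {f : M → G} (hf : ∀ P : Option ι → M, mixedDiff f P = 0) (k : ℕ)
    (P : ι → M) : mixedDiff f (fun i => k • P i) = k ^ Fintype.card ι • mixedDiff f P := by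
  have h := (mixedDiffMultilinear f hf).map_smul_univ (fun _ => k) P
  rwa [prod_const, card_univ] at h

end MixedDifference

section LatticePolytope

variable {n : ℕ}

theorem isLatticePt_iff_mem_span {x : Fin n → ℝ} :
    IsLatticePt x ↔ x ∈ Submodule.span ℤ (Set.range (Pi.basisFun ℝ (Fin n))) := by
  simp [Module.Basis.mem_span_iff_repr_mem, IsLatticePt, eq_comm]

theorem IsLatticePt.add {x y : Fin n → ℝ} (hx : IsLatticePt x) (hy : IsLatticePt y) :
    IsLatticePt (x + y) := by
  rw [isLatticePt_iff_mem_span] at *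
  exact add_mem hx hy

theorem IsLatticePolytope.zero : IsLatticePolytope (0 : Set (Fin n → ℝ)) :=
  ⟨0, zero_nonempty, fun v hv i => ⟨0, by simp [Finset.mem_zero.mp hv]⟩, by simp⟩

theorem IsLatticePolytope.add {A B : Set (Fin n → ℝ)} (hA : IsLatticePolytope A)
    (hB : IsLatticePolytope B) : IsLatticePolytope (A + B) := by
  classical
  obtain ⟨V, hVne, hV, rfl⟩ := hA
  obtain ⟨W, hWne, hW, rfl⟩ := hB
  refine ⟨V + W, hVne.add hWne, fun x hx => ?_, by rw [Finset.coe_add, convexHull_add]⟩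
  obtain ⟨v, hv, w, hw, rfl⟩ := Finset.mem_add.mp hx
  exact (hV v hv).add (hW w hw)

theorem IsLatticePolytope.nonempty {A : Set (Fin n → ℝ)} (hA : IsLatticePolytope A) :
    A.Nonempty := by
  obtain ⟨V, hV, -, rfl⟩ := hA
  exact (coe_nonempty.mpr hV).convexHull

theorem IsLatticePolytope.convex {A : Set (Fin n → ℝ)} (hA : IsLatticePolytope A) :
    Convex ℝ A := by
  obtain ⟨V, -, -, rfl⟩ := hA
  exact convex_convexHull ℝ _

theorem IsLatticePolytope.isCompact {A : Set (Fin n → ℝ)} (hA : IsLatticePolytope A) :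
    IsCompact A := by
  obtain ⟨V, -, -, rfl⟩ := hA
  exact V.finite_toSet.isCompact_convexHull ℝ

/-- The lattice polytopes in `ℝⁿ`, as a monoid under Minkowski addition. -/
def latticePolytopes (n : ℕ) : AddSubmonoid (Set (Fin n → ℝ)) where
  carrier := {P | IsLatticePolytope P}
  zero_mem' := .zero
  add_mem' := .add

/-- The number of lattice points in `A`, as a real number; it is `0` if there are
infinitely many. -/
noncomputable def latticePointCount (A : Set (Fin n → ℝ)) : ℝ :=
  {x ∈ A | IsLatticePt x}.ncard

theorem coe_nsmul_latticePolytopes (k : ℕ) (P : latticePolytopes n) :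
    ((k • P : latticePolytopes n) : Set (Fin n → ℝ)) = (k : ℝ) • (P : Set (Fin n → ℝ)) := by
  have hP : IsLatticePolytope (P : Set (Fin n → ℝ)) := P.2
  induction k with
  | zero => simp [Set.zero_smul_set hP.nonempty]
  | succ k ih =>
    rw [succ_nsmul, AddSubmonoid.coe_add, ih, Nat.cast_succ,
      hP.convex.add_smul k.cast_nonneg zero_le_one, one_smul]

theorem mixedDiff_latticePointCount_eq_zero {ι : Type*} [Fintype ι] (hι : n < Fintype.card ι)
    (P : ι → latticePolytopes n) :
    mixedDiff (fun Q : latticePolytopes n => latticePointCount (Q : Set (Fin n → ℝ))) P = 0 := by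
  choose V hne hV hPV using fun i => (P i).2
  have h := sum_neg_one_pow_card_mul_ncard_sum_convexHull_eq_zero
    (Submodule.span ℤ (Set.range (Pi.basisFun ℝ (Fin n)))).toAddSubgroup (by simpa using hι) hne
    fun i x hx => isLatticePt_iff_mem_span.mp (hV i x hx)
  have hsign : ∀ I : Finset ι,
      (-1 : ℤ) ^ (Fintype.card ι - #I) = (-1) ^ Fintype.card ι * (-1) ^ #I := by
    intro I
    rw [← pow_add]
    exact neg_one_pow_congr (by grind [card_le_univ I])
  simp only [← hPV, Submodule.mem_toAddSubgroup, ← isLatticePt_iff_mem_span] at h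
  replace h := congrArg (fun m : ℤ => (((-1) ^ Fintype.card ι * m : ℤ) : ℝ)) h
  simpa [mixedDiff, latticePointCount, hsign, mul_sum, mul_assoc, and_comm] using h

theorem IsLatticePolytope.tendsto_latticePointCount_smul_div_pow {A : Set (Fin n → ℝ)}
    (hA : IsLatticePolytope A) :
    Filter.Tendsto (fun k : ℕ => latticePointCount ((k : ℝ) • A) / (k : ℝ) ^ n) Filter.atTop
      (nhds (volume A).toReal) := by
  have h := tendsto_card_div_pow_atTop_volume A hA.isCompact.isBounded
    hA.isCompact.isClosed.measurableSet (hA.convex.addHaar_frontier volume)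
  rw [Fintype.card_fin] at h
  refine h.congr' ?_
  filter_upwards [Filter.eventually_ne_atTop 0] with k hk
  have hk' : (k : ℝ) ≠ 0 := by exact_mod_cast hk
  rw [latticePointCount, ← Nat.card_coe_set_eq]
  congr 2
  refine Nat.card_congr (Equiv.subtypeEquiv (Equiv.smulRight hk') fun x => ?_)
  simp only [Set.mem_inter_iff, Equiv.smulRight_apply, Set.mem_ofPred_eq,
    Set.smul_mem_smul_set_iff₀ hk', isLatticePt_iff_mem_span, Set.mem_inv_smul_set_iff₀ hk',
    SetLike.mem_coe]

end LatticePolytope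

/-- lattice-point polarization formula for the normalized mixed volume. -/
theorem mixedVol_eq_alternating_sum_lattice_points {n : ℕ}
    (P : Fin n → Set (Fin n → ℝ)) (hP : ∀ i, IsLatticePolytope (P i)) :
    mixedVol P =
      ∑ I : Finset (Fin n),
        (-1 : ℝ) ^ (n - I.card) * ({x ∈ (∑ i ∈ I, P i) | IsLatticePt x}).ncard := by
  let Q (i : Fin n) : latticePolytopes n := ⟨P i, hP i⟩
  have hcount : ∀ k : ℕ, ∑ I : Finset (Fin n), (-1 : ℝ) ^ (n - #I) *
      latticePointCount ((k : ℝ) • ∑ i ∈ I, P i) =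
        k ^ n * ∑ I : Finset (Fin n), (-1 : ℝ) ^ (n - #I) * latticePointCount (∑ i ∈ I, P i) := by
    intro k
    have h := mixedDiff_nsmul (mixedDiff_latticePointCount_eq_zero (n := n) (by simp)) k Q
    simp only [mixedDiff, AddSubmonoid.coe_finsetSum, coe_nsmul_latticePolytopes, ← smul_sum] at h
    simpa [Q] using h
  have hlim : Filter.Tendsto (fun k : ℕ => ∑ I : Finset (Fin n), (-1 : ℝ) ^ (n - #I) *
      (latticePointCount ((k : ℝ) • ∑ i ∈ I, P i) / (k : ℝ) ^ n)) Filter.atTop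
        (nhds (mixedVol P)) :=
    tendsto_finsetSum _ fun I _ => (IsLatticePolytope.tendsto_latticePointCount_smul_div_pow
      (sum_mem (S := latticePolytopes n) fun i _ => hP i)).const_mul _
  refine tendsto_nhds_unique hlim (tendsto_const_nhds.congr' ?_)
  filter_upwards [Filter.eventually_ne_atTop 0] with k hk
  have hk' : (k : ℝ) ^ n ≠ 0 := by positivity
  simp only [← mul_div_assoc]
  rw [← sum_div, hcount, mul_div_cancel_left₀ _ hk']
  rfl
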